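/- Let K be the group with presentation ⟨x, y | x² = y³ = [x,y]³ = 1⟩, and let K'' denote its second derived subgroup (the derived subgroup of the derived subgroup). Then K'' has index 54 in K and K'' is isomorphic to ℤ × ℤ (the direct product of two infinite cyclic groups). -/

import Mathlib

/-- The relators `x²`, `y³`, `[x,y]³` in the free group on two generators. -/
def rels18 : Set (FreeGroup (Fin 2)) :=
  { (FreeGroup.of 0) ^ 2, (FreeGroup.of 1) ^ 3,
    ((FreeGroup.of 0)⁻¹ * (FreeGroup.of 1)⁻¹ * FreeGroup.of 0 * FreeGroup.of 1) ^ 3 }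

/-- `K = ⟨x, y ∣ x² = y³ = [x,y]³ = 1⟩`. -/
abbrev K18 : Type := PresentedGroup rels18

namespace P18

def X : K18 := PresentedGroup.of 0
def Y : K18 := PresentedGroup.of 1

lemma hX : X * X = 1 := by
  have h : (PresentedGroup.mk rels18) ((FreeGroup.of 0) ^ 2) = 1 :=
    PresentedGroup.one_of_mem (by simp [rels18])
  rw [map_pow, pow_two] at h
  exact h

lemma hY : Y * Y * Y = 1 := by
  have h : (PresentedGroup.mk rels18) ((FreeGroup.of 1) ^ 3) = 1 :=
    PresentedGroup.one_of_mem (by simp [rels18])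
  rw [map_pow, pow_three'] at h
  exact h

lemma hXY : (X⁻¹ * Y⁻¹ * X * Y) ^ 3 = 1 := by
  have h : (PresentedGroup.mk rels18) (((FreeGroup.of 0)⁻¹ * (FreeGroup.of 1)⁻¹ * FreeGroup.of 0 * FreeGroup.of 1) ^ 3) = 1 :=
    PresentedGroup.one_of_mem (by simp [rels18])
  simp only [map_pow, map_mul, map_inv] at h
  exact h

def Z : K18 := X * Y * X
def U : K18 := Y * Z
def V : K18 := Z * Y
def R : K18 := Z⁻¹ * Y

lemma Xinv : X⁻¹ = X := inv_eq_of_mul_eq_one_left hX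
lemma XX (z : K18) : X * (X * z) = z := by rw [← mul_assoc, hX, one_mul]
lemma YYinv : Y * Y = Y⁻¹ := eq_inv_of_mul_eq_one_left hY
lemma ZZinv : Z * Z = Z⁻¹ := by
  apply eq_inv_of_mul_eq_one_left
  have := congrArg (fun z => X * z * X) hY
  simpa only [Z, mul_assoc, XX, hX, mul_one, one_mul] using this
lemma YYinv2 (w : K18) : Y * (Y * w) = Y⁻¹ * w := by rw [← mul_assoc, YYinv]
lemma ZZinv2 (w : K18) : Z * (Z * w) = Z⁻¹ * w := by rw [← mul_assoc, ZZinv]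
lemma YYinv3 : Y⁻¹ * Y⁻¹ = Y := by rw [← mul_inv_rev, YYinv, inv_inv]
lemma ZZinv3 (w : K18) : Z⁻¹ * (Z⁻¹ * w) = Z * w := by
  rw [← mul_assoc, ← mul_inv_rev, ZZinv, inv_inv]
lemma R3 : R ^ 3 = 1 := by
  have h := hXY
  simp only [Xinv] at h
  rw [← h, R, Z, mul_inv_rev, mul_inv_rev, Xinv]
  simp only [mul_assoc]
lemma XZ : X * Z * X⁻¹ = Y := by
  simp only [Z, Xinv, mul_assoc, XX, hX, mul_one]
lemma XY : X * Y * X⁻¹ = Z := by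
  simp only [Z, Xinv]
lemma XU : X * U * X⁻¹ = V := by
  rw [U, V, ← XY, ← conj_mul, XY, XZ]
lemma XV : X * V * X⁻¹ = U := by
  rw [U, V, ← conj_mul, XY, XZ]
lemma XR : X * R * X⁻¹ = R⁻¹ := by
  rw [R, ← conj_mul, ← conj_inv, XY, XZ, mul_inv_rev, inv_inv]
lemma C : Y * (Z⁻¹ * Y) = Z * (Y⁻¹ * Z) := by
  have h := R3
  rw [pow_three', mul_eq_one_iff_eq_inv, R, mul_inv_rev, inv_inv] at h
  rw [← h]; simp only [mul_assoc, mul_inv_cancel_left]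
lemma UVe : U * V = Y * (Z⁻¹ * Y) := by
  simp only [U, V, mul_assoc, ZZinv2]
lemma UV : U * V = V * U := by
  rw [UVe, C]
  simp only [U, V, mul_assoc, YYinv2]
lemma RU : R * U * R⁻¹ = V := by
  simp only [R, U, V, mul_assoc, YYinv2, mul_inv_rev, inv_inv]
  rw [← C, inv_mul_cancel_left, ZZinv3]
lemma RU' : R⁻¹ * U * R = (U * V)⁻¹ := by
  rw [UVe]
  simp only [R, U, mul_assoc, mul_inv_rev, inv_inv, mul_inv_cancel_left, YYinv]
lemma RV' : R⁻¹ * V * R = U := by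
  rw [← RU]; group
lemma yR : Y = R⁻¹ * U⁻¹ := by
  simp only [R, U, mul_inv_rev, inv_inv, mul_assoc, mul_inv_cancel_left, YYinv3]

/-- Normal form. -/
def nf (a b i j : ℤ) : K18 := U ^ a * V ^ b * R ^ i * X ^ j

lemma cUV : Commute U V := UV

lemma nfX (a b i j : ℤ) : X * nf a b i j = nf b a (-i) (j + 1) := by
  have h : X * nf a b i j = (X * U * X⁻¹) ^ a * (X * V * X⁻¹) ^ b * (X * R * X⁻¹) ^ i * (X * X ^ j) := by
    simp only [conj_zpow, nf]; group
  rw [h, XU, XV, XR, nf, inv_zpow', (cUV.zpow_zpow b a).eq, add_comm j 1, zpow_one_add]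

lemma nfR (a b i j : ℤ) : R⁻¹ * nf a b i j = nf (b - a) (-a) (i - 1) j := by
  have h : R⁻¹ * nf a b i j = (R⁻¹ * U * R⁻¹⁻¹) ^ a * (R⁻¹ * V * R⁻¹⁻¹) ^ b * (R⁻¹ * R ^ i) * X ^ j := by
    simp only [conj_zpow, nf]; group
  rw [h, inv_inv, RU', RV', nf, inv_zpow', cUV.mul_zpow, mul_assoc (U ^ (-a)),
    ((cUV.symm).zpow_zpow (-a) b).eq, ← mul_assoc (U ^ (-a)), ← zpow_add, ← zpow_neg_one R,
    ← zpow_add, show -a + b = b - a by ring, show -1 + i = i - 1 by ring]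

lemma nfU (a b i j : ℤ) : U⁻¹ * nf a b i j = nf (a - 1) b i j := by
  simp only [nf, ← mul_assoc, ← zpow_neg_one U, ← zpow_add, show -1 + a = a - 1 by ring]

lemma nfY (a b i j : ℤ) : ∃ a' b' i' j', Y * nf a b i j = nf a' b' i' j' := by
  rw [yR, mul_assoc, nfU, nfR]; exact ⟨_, _, _, _, rfl⟩

lemma exists_nf (k : K18) : ∃ a b i j, k = nf a b i j := by
  obtain ⟨w, rfl⟩ := PresentedGroup.mk_surjective rels18 k
  suffices H : ∀ (w : FreeGroup (Fin 2)) (k : K18), (∃ a b i j, k = nf a b i j) →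
      ∃ a b i j, PresentedGroup.mk rels18 w * k = nf a b i j by
    have := H w 1 ⟨0, 0, 0, 0, by simp [nf]⟩
    simpa using this
  have hx : ∀ (k : K18), (∃ a b i j, k = nf a b i j) → ∃ a b i j, X * k = nf a b i j := by
    rintro k ⟨a, b, i, j, rfl⟩
    exact ⟨_, _, _, _, nfX ..⟩
  have hy : ∀ (k : K18), (∃ a b i j, k = nf a b i j) → ∃ a b i j, Y * k = nf a b i j := by
    rintro k ⟨a, b, i, j, rfl⟩
    exact nfY ..
  intro w
  induction w using FreeGroup.induction_on with
  | C1 => intro k h; simpa using h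
  | of i =>
    intro k h
    fin_cases i
    · exact hx k h
    · exact hy k h
  | inv_of i _ =>
    intro k h
    rw [map_inv]
    fin_cases i
    · have := hx k h
      rw [← Xinv] at this
      exact this
    · have := hy _ (hy k h)
      rw [← mul_assoc, YYinv] at this
      exact this
  | mul a b ha hb =>
    intro k h
    rw [map_mul, mul_assoc]
    exact ha _ (hb _ h)

section rep
variable (S : Type) [CommRing S]

def px : Equiv.Perm (S × S) where
  toFun p := (p.2, p.1)
  invFun p := (p.2, p.1)
  left_inv _ := rfl
  right_inv _ := rfl

def py : Equiv.Perm (S × S) where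
  toFun p := (p.2 - p.1 + 1, 1 - p.1)
  invFun p := (1 - p.2, p.1 - p.2)
  left_inv p := by ext <;> simp <;> ring
  right_inv p := by ext <;> simp

def phi : K18 →* Equiv.Perm (S × S) :=
  PresentedGroup.toGroup (f := ![px S, py S]) (rels := rels18) (by
    intro r hr
    simp only [rels18, Set.mem_insert_iff, Set.mem_singleton_iff] at hr
    rcases hr with rfl | rfl | rfl
    · ext p <;> simp [px, pow_two]
    · ext p <;> simp [py, pow_three] <;> ring
    · ext p <;> simp [px, py, pow_three, Equiv.Perm.inv_def] <;> ring)

lemma phiX : phi S X = px S := by simp [phi, X]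
lemma phiY : phi S Y = py S := by simp [phi, Y]
lemma phiU (p : S × S) : phi S U p = (p.1 + 1, p.2) := by
  simp only [U, Z, map_mul, phiX, phiY]
  ext <;> simp [px, py] <;> ring
lemma phiV (p : S × S) : phi S V p = (p.1, p.2 + 1) := by
  simp only [V, Z, map_mul, phiX, phiY]
  ext <;> simp [px, py] <;> ring
lemma phiR (p : S × S) : phi S R p = (- p.2, p.1 - p.2) := by
  simp only [R, Z, map_mul, map_inv, phiX, phiY]
  ext <;> simp [px, py, Equiv.Perm.inv_def] <;> ring
end rep

lemma phiUn (a : ℤ) (p : ℤ × ℤ) : (phi ℤ U ^ a) p = (p.1 + a, p.2) := by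
  induction a generalizing p with
  | zero => simp
  | succ n ih => rw [zpow_add_one, Equiv.Perm.mul_apply, phiU, ih]; ext <;> simp; ring
  | pred n ih =>
    rw [zpow_sub_one, Equiv.Perm.mul_apply]
    have : (phi ℤ U)⁻¹ p = (p.1 - 1, p.2) := by
      rw [Equiv.Perm.inv_eq_iff_eq, phiU]; simp
    rw [this, ih]; ext <;> simp; ring

lemma phiVn (a : ℤ) (p : ℤ × ℤ) : (phi ℤ V ^ a) p = (p.1, p.2 + a) := by
  induction a generalizing p with
  | zero => simp
  | succ n ih => rw [zpow_add_one, Equiv.Perm.mul_apply, phiV, ih]; ext <;> simp; ring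
  | pred n ih =>
    rw [zpow_sub_one, Equiv.Perm.mul_apply]
    have : (phi ℤ V)⁻¹ p = (p.1, p.2 - 1) := by
      rw [Equiv.Perm.inv_eq_iff_eq, phiV]; simp
    rw [this, ih]; ext <;> simp; ring

lemma trans_inj {a b : ℤ} (h : U ^ a * V ^ b = 1) : a = 0 ∧ b = 0 := by
  have := congrArg (fun k => phi ℤ k (0, 0)) h
  simpa [phiUn, phiVn] using this

lemma red {G : Type*} [Group G] (n : ℕ) [NeZero n] (g : G) (hg : g ^ n = 1) (a : ℤ) :
    ∃ k : Fin n, ∃ q : ℤ, a = (k : ℕ) + n * q ∧ g ^ a = g ^ (k : ℕ) := by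
  have hn : (0 : ℤ) < n := by exact_mod_cast Nat.pos_of_ne_zero (NeZero.ne n)
  have h0 := Int.emod_nonneg a hn.ne'
  have h1 := Int.emod_lt_of_pos a hn
  have h2 := Int.emod_add_mul_ediv a n
  obtain ⟨k, hk⟩ := Int.eq_ofNat_of_zero_le h0
  refine ⟨⟨k, by omega⟩, a / n, ?_, ?_⟩
  · simp only; omega
  · simp only
    rw [← h2, zpow_add, zpow_mul, hk]
    simp [hg]

abbrev T := ZMod 3

def pu : Equiv.Perm (T × T) where
  toFun p := (p.1 + 1, p.2)
  invFun p := (p.1 - 1, p.2)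
  left_inv p := by ext <;> simp
  right_inv p := by ext <;> simp

def pv : Equiv.Perm (T × T) where
  toFun p := (p.1, p.2 + 1)
  invFun p := (p.1, p.2 - 1)
  left_inv p := by ext <;> simp
  right_inv p := by ext <;> simp

def pr : Equiv.Perm (T × T) where
  toFun p := (- p.2, p.1 - p.2)
  invFun p := (p.2 - p.1, - p.1)
  left_inv p := by ext <;> simp
  right_inv p := by ext <;> simp

lemma eU : phi T U = pu := Equiv.ext (phiU T)
lemma eV : phi T V = pv := Equiv.ext (phiV T)
lemma eR : phi T R = pr := Equiv.ext (phiR T)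

lemma pu3 : pu ^ 3 = 1 := by decide +kernel
lemma pv3 : pv ^ 3 = 1 := by decide +kernel
lemma pr3 : pr ^ 3 = 1 := by decide +kernel
lemma px2 : px T ^ 2 = 1 := by decide +kernel

def F (t : Fin 3 × Fin 3 × Fin 3 × Fin 2) : Equiv.Perm (T × T) :=
  pu ^ (t.1 : ℕ) * pv ^ (t.2.1 : ℕ) * pr ^ (t.2.2.1 : ℕ) * px T ^ (t.2.2.2 : ℕ)

lemma Finj' : ∀ t s, (F t (0, 0), F t (1, 0), F t (0, 1)) = (F s (0, 0), F s (1, 0), F s (0, 1)) →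
    t = s := by decide +kernel

lemma Finj : Function.Injective F := by
  intro t s h
  apply Finj'
  rw [h]

lemma phi_nf (a b i j : ℤ) : ∃ (a' b' i' : Fin 3) (j' : Fin 2) (p q r s : ℤ),
    a = (a' : ℕ) + 3 * p ∧ b = (b' : ℕ) + 3 * q ∧ i = (i' : ℕ) + 3 * r ∧ j = (j' : ℕ) + 2 * s ∧
    phi T (nf a b i j) = F (a', b', i', j') := by
  obtain ⟨a', p, h1, h1'⟩ := red 3 pu pu3 a
  obtain ⟨b', q, h2, h2'⟩ := red 3 pv pv3 b
  obtain ⟨i', r, h3, h3'⟩ := red 3 pr pr3 i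
  obtain ⟨j', s, h4, h4'⟩ := red 2 (px T) px2 j
  refine ⟨a', b', i', j', p, q, r, s, h1, h2, h3, h4, ?_⟩
  simp only [nf, map_mul, map_zpow, eU, eV, eR, phiX, h1', h2', h3', h4', F]

lemma index_ker : (phi T).ker.index = 54 := by
  rw [Subgroup.index_ker]
  have h : ((phi T).range : Set (Equiv.Perm (T × T))) = Set.range F := by
    apply Set.Subset.antisymm
    · rintro _ ⟨k, rfl⟩
      obtain ⟨a, b, i, j, rfl⟩ := exists_nf k
      obtain ⟨a', b', i', j', _, _, _, _, _, _, _, _, h⟩ := phi_nf a b i j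
      exact ⟨_, h.symm⟩
    · rintro _ ⟨⟨a, b, i, j⟩, rfl⟩
      refine ⟨nf (a : ℕ) (b : ℕ) (i : ℕ) (j : ℕ), ?_⟩
      simp only [nf, map_mul, zpow_natCast, map_pow, eU, eV, eR, phiX, F]
  have h2 : Nat.card (phi T).range = Nat.card (Set.range F) := by
    rw [← h]; rfl
  rw [h2, Nat.card_range_of_injective Finj]
  simp

lemma nf_of_ker {k : K18} (hk : phi T k = 1) : ∃ a b : ℤ, k = (U ^ 3) ^ a * (V ^ 3) ^ b := by
  obtain ⟨a, b, i, j, rfl⟩ := exists_nf k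
  obtain ⟨a', b', i', j', p, q, r, s, h1, h2, h3, h4, h⟩ := phi_nf a b i j
  have h0 : F (a', b', i', j') = F (0, 0, 0, 0) := by
    rw [← h, hk]; simp [F]
  have := Finj h0
  simp only [Prod.mk.injEq] at this
  obtain ⟨rfl, rfl, rfl, rfl⟩ := this
  refine ⟨p, q, ?_⟩
  have hR : R ^ (3 : ℤ) = 1 := by exact_mod_cast R3
  have hX2 : X ^ (2 : ℤ) = 1 := by rw [zpow_two, hX]
  simp only [Fin.val_zero, Nat.cast_zero, zero_add] at h1 h2 h3 h4
  rw [nf, h1, h2, h3, h4, zpow_mul, zpow_mul, zpow_mul, zpow_mul, hR, hX2]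
  simp only [one_zpow, mul_one]
  norm_cast

/-- The abelianization map. -/
def chi : K18 →* Multiplicative (ZMod 6) :=
  PresentedGroup.toGroup (f := ![Multiplicative.ofAdd 3, Multiplicative.ofAdd 2]) (rels := rels18) (by
    intro r hr
    simp only [rels18, Set.mem_insert_iff, Set.mem_singleton_iff] at hr
    rcases hr with rfl | rfl | rfl
    · simp; decide
    · simp; decide
    · simp)

lemma chiX : chi X = Multiplicative.ofAdd 3 := by simp [chi, X]
lemma chiY : chi Y = Multiplicative.ofAdd 2 := by simp [chi, Y]
lemma chiU : chi U = Multiplicative.ofAdd 4 := by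
  simp only [U, Z, map_mul, chiX, chiY]; decide
lemma chiV : chi V = Multiplicative.ofAdd 4 := by
  simp only [V, Z, map_mul, chiX, chiY]; decide
lemma chiR : chi R = 1 := by
  simp only [R, Z, map_mul, map_inv, chiX, chiY]; decide

lemma chi_nf {a b i j : ℤ} (h : chi (nf a b i j) = 1) : (3 : ℤ) ∣ a + b ∧ (2 : ℤ) ∣ j := by
  simp only [nf, map_mul, map_zpow, chiU, chiV, chiR, chiX, one_zpow, mul_one] at h
  have h2 : ((a * 4 + b * 4 + j * 3 : ℤ) : ZMod 6) = 0 := by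
    push_cast
    simpa [← ofAdd_zsmul, ← ofAdd_add] using h
  rw [ZMod.intCast_zmod_eq_zero_iff_dvd] at h2
  omega

lemma d1 : derivedSeries K18 1 ≤ chi.ker := by
  rw [derivedSeries_one, commutator_def, Subgroup.commutator_le]
  intro a _ b _
  simp [MonoidHom.mem_ker, map_commutatorElement, commutatorElement_eq_one_iff_mul_comm, mul_comm]

lemma cW : Commute (pu * pv⁻¹) pr := by
  show _ * _ = _ * _
  decide +kernel

lemma form {k : K18} (h : chi k = 1) : ∃ m i : ℤ, phi T k = (pu * pv⁻¹) ^ m * pr ^ i := by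
  obtain ⟨a, b, i, j, rfl⟩ := exists_nf k
  obtain ⟨⟨p, hp⟩, ⟨q, hq⟩⟩ := chi_nf h
  refine ⟨a, i, ?_⟩
  have c : Commute pu pv⁻¹ := by
    show _ * _ = _ * _
    decide +kernel
  have hb : b = -a + 3 * p := by omega
  have e1 : px T ^ (2 : ℤ) = 1 := by exact_mod_cast px2
  have e2 : pv ^ (3 : ℤ) = 1 := by exact_mod_cast pv3
  simp only [nf, map_mul, map_zpow, eU, eV, eR, phiX]
  rw [hq, hb, zpow_mul, e1, zpow_add, zpow_mul, e2, c.mul_zpow]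
  simp

lemma d2 : derivedSeries K18 2 ≤ (phi T).ker := by
  rw [derivedSeries_succ, Subgroup.commutator_le]
  intro a ha b hb
  obtain ⟨m, i, hm⟩ := form (d1 ha)
  obtain ⟨m', i', hm'⟩ := form (d1 hb)
  rw [MonoidHom.mem_ker, map_commutatorElement, commutatorElement_eq_one_iff_commute, hm, hm']
  refine Commute.mul_left (Commute.mul_right ?_ ?_) (Commute.mul_right ?_ ?_)
  · exact Commute.zpow_zpow_self _ _ _
  · exact cW.zpow_zpow _ _
  · exact (cW.symm).zpow_zpow _ _
  · exact Commute.zpow_zpow_self _ _ _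

lemma comm_mem (a b : K18) : a * b * a⁻¹ * b⁻¹ ∈ derivedSeries K18 1 := by
  rw [derivedSeries_one, commutator_def]
  exact Subgroup.commutator_mem_commutator (Subgroup.mem_top a) (Subgroup.mem_top b)

lemma R_mem : R ∈ derivedSeries K18 1 := by
  have := comm_mem X Y⁻¹
  have e : X * Y⁻¹ * X⁻¹ * Y⁻¹⁻¹ = R := by
    rw [← conj_inv, XY, inv_inv, R]
  rwa [e] at this

lemma W_mem : U * V⁻¹ ∈ derivedSeries K18 1 := by
  have := comm_mem X V
  rwa [XV] at this

lemma U3_mem : U ^ 3 ∈ derivedSeries K18 2 := by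
  have h : R⁻¹ * (U * V⁻¹) * R⁻¹⁻¹ * (U * V⁻¹)⁻¹ ∈ derivedSeries K18 2 := by
    rw [derivedSeries_succ]
    exact Subgroup.commutator_mem_commutator (inv_mem R_mem) W_mem
  have e : R⁻¹ * (U * V⁻¹) * R⁻¹⁻¹ * (U * V⁻¹)⁻¹ = (U ^ 3)⁻¹ := by
    have e1 : R⁻¹ * (U * V⁻¹) * R⁻¹⁻¹ = (U * V)⁻¹ * U⁻¹ := by
      rw [← conj_mul, ← conj_inv, inv_inv, RU', RV']
    have c : (U⁻¹ * U⁻¹) * V = V * (U⁻¹ * U⁻¹) :=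
      (cUV.inv_left.mul_left cUV.inv_left).eq
    calc _ = V⁻¹ * ((U⁻¹ * U⁻¹) * V) * U⁻¹ := by rw [e1]; group
      _ = _ := by rw [c]; group
  rw [e] at h
  exact inv_mem_iff.mp h

lemma V3_mem : V ^ 3 ∈ derivedSeries K18 2 := by
  have n : (derivedSeries K18 2).Normal := inferInstance
  have := n.conj_mem _ U3_mem X
  rwa [← conj_pow, XU] at this

lemma ker_eq : derivedSeries K18 2 = (phi T).ker := by
  apply le_antisymm d2
  intro k hk
  obtain ⟨a, b, rfl⟩ := nf_of_ker hk
  exact mul_mem (zpow_mem U3_mem _) (zpow_mem V3_mem _)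

def psi : Multiplicative ℤ × Multiplicative ℤ →* derivedSeries K18 2 where
  toFun p := ⟨(U ^ 3) ^ p.1.toAdd * (V ^ 3) ^ p.2.toAdd,
    mul_mem (zpow_mem U3_mem _) (zpow_mem V3_mem _)⟩
  map_one' := by apply Subtype.ext; simp
  map_mul' p q := by
    apply Subtype.ext
    have c : Commute (V ^ 3) (U ^ 3) := (cUV.symm).pow_pow 3 3
    simp only [Prod.fst_mul, Prod.snd_mul, toAdd_mul, zpow_add, Subgroup.coe_mul]
    exact Commute.mul_mul_mul_comm (c.symm.zpow_zpow _ _) _ _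

lemma psi_inj : Function.Injective psi := by
  rw [injective_iff_map_eq_one]
  rintro ⟨a, b⟩ h
  have h' : (U ^ 3) ^ a.toAdd * (V ^ 3) ^ b.toAdd = 1 := congrArg Subtype.val h
  have h2 : U ^ (3 * a.toAdd) * V ^ (3 * b.toAdd) = 1 := by
    rw [zpow_mul, zpow_mul]; exact_mod_cast h'
  obtain ⟨h3, h4⟩ := trans_inj h2
  have ha : a.toAdd = 0 := by omega
  have hb : b.toAdd = 0 := by omega
  exact Prod.ext (by exact ha) (by exact hb)

lemma psi_surj : Function.Surjective psi := by
  rintro ⟨k, hk⟩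
  obtain ⟨a, b, rfl⟩ := nf_of_ker (d2 hk)
  exact ⟨(Multiplicative.ofAdd a, Multiplicative.ofAdd b), rfl⟩

end P18

/-- the second derived subgroup `K''` of
`K = ⟨x, y ∣ x² = y³ = [x,y]³ = 1⟩` has index `54` in `K` and `K'' ≅ ℤ × ℤ`. -/
theorem stmt18 :
    (derivedSeries K18 2).index = 54 ∧
    Nonempty ((derivedSeries K18 2) ≃* Multiplicative ℤ × Multiplicative ℤ) := by
  refine ⟨?_, ⟨(MulEquiv.ofBijective P18.psi ⟨P18.psi_inj, P18.psi_surj⟩).symm⟩⟩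
  rw [P18.ker_eq, P18.index_ker]
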